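/- Let ℓ be an odd prime, q a prime power coprime to ℓ, and t the multiplicative order of q modulo ℓ. For all real numbers u > 0 and ε > 0 there exists N = N(ε) such that for all n ≥ N, #{μ ∈ 𝔛_n : v_ℓ(d_μ) < v_ℓ((n/t)_u)} / |𝔛_n| < ε. Here, for real numbers 0 < r < s, the extended falling factorial is (s)_r = ⌊s⌋! / ⌊s − r⌋!. -/

import Mathlib

/-- The `i`-th part (0-indexed, parts in weakly decreasing order) of the partition whose
multiset of parts is `lam`; `0` if `i` is at least the number of parts. -/
def partNth (lam : Multiset ℕ) (i : ℕ) : ℕ :=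
  ((lam.sort (· ≤ ·)).reverse.getD i 0)

/-- The `j`-th part (0-indexed) of the conjugate partition: the number of parts `> j`. -/
def conjNth (lam : Multiset ℕ) (j : ℕ) : ℕ :=
  (lam.filter (fun m => j < m)).card

/-- The cells `(i, j)` (0-indexed) of the Young diagram of `lam`. -/
def cellsOf (lam : Multiset ℕ) : Finset (ℕ × ℕ) :=
  (Finset.range (Multiset.card lam) ×ˢ Finset.range lam.sum).filter
    (fun c => c.2 < partNth lam c.1)

/-- The hook length of the cell `c = (i, j)` of `lam`:
`(λᵢ − j) + (λ'ⱼ − i) − 1`. -/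
def hookLen (lam : Multiset ℕ) (c : ℕ × ℕ) : ℕ :=
  (partNth lam c.1 - c.2) + (conjNth lam c.2 - c.1) - 1

/-- The product of all hook lengths of `lam`. -/
def hookProd (lam : Multiset ℕ) : ℕ :=
  ∏ c ∈ cellsOf lam, hookLen lam c

/-- `α(λ) = Σᵢ (i − 1)·λᵢ` (1-indexed), i.e. `Σᵢ i·λᵢ` for the 0-indexed parts. -/
def alphaStat (lam : Multiset ℕ) : ℕ :=
  ∑ i ∈ Finset.range (Multiset.card lam), i * partNth lam i

/-- `𝔣_λ = n! / ∏_{h ∈ H(λ)} |h|`, the degree of the irreducible character of `S_n`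
indexed by `λ`, as a rational number. -/
def fDeg (lam : Multiset ℕ) : ℚ :=
  (Nat.factorial lam.sum : ℚ) / (hookProd lam : ℚ)

/-- `d_λ(x) = x^{α(λ)} · ∏_{i=1}^{n} (x^i − 1) / ∏_{h ∈ H(λ)} (x^{|h|} − 1)`. -/
def dDeg (lam : Multiset ℕ) (x : ℕ) : ℚ :=
  (x : ℚ) ^ alphaStat lam * (∏ i ∈ Finset.Icc 1 lam.sum, ((x : ℚ) ^ i - 1)) /
    ∏ c ∈ cellsOf lam, ((x : ℚ) ^ hookLen lam c - 1)
/-- `μ` is a member of `𝔛_n`: a finitely supported assignment of a partition (given by its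
multiset of positive parts) to each monic irreducible polynomial `f ≠ x` over `F`, such that
`Σ_f |μ(f)|·deg f = n`. -/
def IsXn (F : Type*) [Field F] (n : ℕ) (μ : Polynomial F →₀ Multiset ℕ) : Prop :=
  (∀ f ∈ μ.support, f.Monic ∧ Irreducible f ∧ f ≠ Polynomial.X) ∧
  (∀ f : Polynomial F, ∀ m ∈ μ f, 0 < m) ∧
  (μ.sum fun f lam => lam.sum * f.natDegree) = n

/-- `a_μ = ∏_{i=1}^{n} (q^i − 1) / ∏_{f ∈ Φ} ∏_{i=1}^{|μ(f)|} (q^{d(f)·i} − 1)`. -/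
noncomputable def aMu (q : ℕ) {F : Type*} [Field F] (n : ℕ)
    (μ : Polynomial F →₀ Multiset ℕ) : ℚ :=
  (∏ i ∈ Finset.Icc 1 n, ((q : ℚ) ^ i - 1)) /
    ∏ f ∈ μ.support, ∏ i ∈ Finset.Icc 1 (μ f).sum, ((q : ℚ) ^ (f.natDegree * i) - 1)

/-- `ψ_m(x) = ∏_{i=1}^{m} (x^i − 1)`. -/
def psiPoly (m : ℕ) (x : ℚ) : ℚ := ∏ i ∈ Finset.Icc 1 m, (x ^ i - 1)

/-- `H(λ, x) = x^{α(λ)} / ∏_{h ∈ H(λ)} (x^{|h|} − 1)`. -/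
def hFactor (lam : Multiset ℕ) (x : ℚ) : ℚ :=
  x ^ alphaStat lam / ∏ c ∈ cellsOf lam, (x ^ hookLen lam c - 1)

/-- `d_μ = ψ_n(q) · ∏_{f ∈ Φ} H(μ(f), q^{d(f)})`, the degree of the irreducible character of
`GL(n, q)` indexed by `μ`, as a rational number. -/
noncomputable def dMu (q : ℕ) {F : Type*} [Field F] (n : ℕ)
    (μ : Polynomial F →₀ Multiset ℕ) : ℚ :=
  psiPoly n (q : ℚ) * ∏ f ∈ μ.support, hFactor (μ f) ((q : ℚ) ^ f.natDegree)

/-- The extended falling factorial `(s)_r = ⌊s⌋! / ⌊s − r⌋!` for real `0 < r < s`. -/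
noncomputable def fallFact (s r : ℝ) : ℕ :=
  Nat.factorial ⌊s⌋₊ / Nat.factorial ⌊s - r⌋₊

/-!
Only the hook factors of `d_μ` can have negative `ℓ`-adic valuation. There is one such factor per
box of the partitions of `μ`, and by lifting the exponent each contributes at most `O(log n)`,
while `v_ℓ(ψ_n(q)) ≥ ⌊n / t⌋`. Hence `v_ℓ(d_μ) ≥ ⌊n / t⌋ - O(log n) · #boxes`, whereas
`v_ℓ((n / t)_u) = O(log n)`: a low valuation forces `μ` to have at least `50 (log₂ n + 1)` boxes
once `n` is large.

Such `μ` are rare. Encoding `μ` by the multiplicities of the parts of its partitions, an Euler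
product over the monic irreducible polynomials `f` bounds the moment `∑ (3/2) ^ #boxes / q ^ n` by
`exp (24 ∑ q ^ (-deg f))`, the sum running over `deg f ≤ n`. There are at most `q ^ d / d` such
`f` of degree `d`, so this is at most `exp 24 · n ^ 24`. Since
`n ^ 25 ≤ (3/2) ^ (50 (log₂ n + 1))` and `|𝔛_n| ≥ q ^ (n - 1)`, the proportion of `μ` with that
many boxes is `O(1 / n)`.
-/

open Filter Finset Polynomial Topology

section MonicIrreducible

variable {F : Type*} [Field F] [Finite F]

theorem card_mul_le_of_monic_irreducible {d : ℕ} (hd : d ≠ 0) {S : Finset F[X]}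
    (hS : ∀ f ∈ S, f.Monic ∧ Irreducible f ∧ f.natDegree = d) :
    #S * d ≤ Nat.card F ^ d := by
  have hprod_dvd : ∏ f ∈ S, f ∣ (X ^ Nat.card F ^ d - X : F[X]) := by
    refine Finset.prod_dvd_of_coprime (fun f hf g hg hfg ↦ ?_) fun f hf ↦ ?_
    · obtain ⟨hfm, hfi, -⟩ := hS f hf
      obtain ⟨hgm, hgi, -⟩ := hS g hg
      exact hfi.coprime_iff_not_dvd.2 fun hdvd ↦
        hfg (eq_of_monic_of_associated hfm hgm (hfi.associated_of_dvd hgi hdvd))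
    · obtain ⟨-, hfi, rfl⟩ := hS f hf
      exact hfi.natDegree_dvd_iff_dvd_X_pow_card_pow_sub_X.1 dvd_rfl
  have hq : 1 < Nat.card F := Finite.one_lt_card
  calc #S * d = (∏ f ∈ S, f).natDegree := by
        rw [natDegree_prod_of_monic _ _ fun f hf ↦ (hS f hf).1,
          Finset.sum_congr rfl fun f hf ↦ (hS f hf).2.2, Finset.sum_const, smul_eq_mul]
    _ ≤ (X ^ Nat.card F ^ d - X : F[X]).natDegree :=
        natDegree_le_of_dvd hprod_dvd (FiniteField.X_pow_card_pow_sub_X_ne_zero F hd hq)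
    _ = Nat.card F ^ d := FiniteField.X_pow_card_pow_sub_X_natDegree_eq F hd hq

theorem sum_inv_card_pow_natDegree_le_one_add_log {n : ℕ} {S : Finset F[X]}
    (hS : ∀ f ∈ S, f.Monic ∧ Irreducible f ∧ f.natDegree ≤ n) :
    ∑ f ∈ S, ((Nat.card F : ℝ) ^ f.natDegree)⁻¹ ≤ 1 + Real.log n := by
  have hdeg : ∀ f ∈ S, f.natDegree ∈ Icc 1 n := fun f hf ↦
    mem_Icc.2 ⟨(hS f hf).2.1.natDegree_pos, (hS f hf).2.2⟩
  calc ∑ f ∈ S, ((Nat.card F : ℝ) ^ f.natDegree)⁻¹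
      = ∑ d ∈ Icc 1 n, #{f ∈ S | f.natDegree = d} * ((Nat.card F : ℝ) ^ d)⁻¹ := by
        rw [← Finset.sum_fiberwise_of_maps_to hdeg]
        refine Finset.sum_congr rfl fun d _ ↦ ?_
        rw [Finset.sum_congr rfl fun f hf ↦ by rw [(mem_filter.1 hf).2], Finset.sum_const,
          nsmul_eq_mul]
    _ ≤ ∑ d ∈ Icc 1 n, (d : ℝ)⁻¹ := by
        refine Finset.sum_le_sum fun d hd ↦ ?_
        have hd_pos : 0 < d := (mem_Icc.1 hd).1
        have hcard : #{f ∈ S | f.natDegree = d} * d ≤ Nat.card F ^ d :=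
          card_mul_le_of_monic_irreducible hd_pos.ne' fun f hf ↦
            have hf' := mem_filter.1 hf
            ⟨(hS f hf'.1).1, (hS f hf'.1).2.1, hf'.2⟩
        have hq : (0 : ℝ) < Nat.card F := by exact_mod_cast Nat.card_pos
        rw [← div_eq_mul_inv, div_le_iff₀ (by positivity), inv_mul_eq_div,
          le_div_iff₀ (by exact_mod_cast hd_pos)]
        exact_mod_cast hcard
    _ = harmonic n := by rw [harmonic_eq_sum_Icc]; push_cast; rfl
    _ ≤ 1 + Real.log n := harmonic_le_one_add_log n

end MonicIrreducible

section EulerProduct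

theorem inv_one_sub_le_exp {x : ℝ} (hx : x < 1) : (1 - x)⁻¹ ≤ Real.exp (x / (1 - x)) :=
  calc (1 - x)⁻¹ = x / (1 - x) + 1 := by have := sub_pos.2 hx; field_simp; ring
    _ ≤ Real.exp (x / (1 - x)) := Real.add_one_le_exp _

theorem prod_inv_one_sub_pow_le_exp {x : ℝ} (hx₀ : 0 ≤ x) (hx₁ : x < 1) (n : ℕ) :
    ∏ j ∈ Icc 1 n, (1 - x ^ j)⁻¹ ≤ Real.exp (x / (1 - x) ^ 2) := by
  have : 0 < 1 - x := sub_pos.2 hx₁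
  have hpow_le : ∀ j ∈ Icc 1 n, x ^ j ≤ x := fun j hj ↦
    pow_le_of_le_one hx₀ hx₁.le (Nat.one_le_iff_ne_zero.1 (mem_Icc.1 hj).1)
  calc ∏ j ∈ Icc 1 n, (1 - x ^ j)⁻¹
      ≤ ∏ j ∈ Icc 1 n, Real.exp (x ^ j / (1 - x)) := by
        refine Finset.prod_le_prod (fun j hj ↦ ?_) fun j hj ↦ ?_
        · exact inv_nonneg.2 (by linarith [hpow_le j hj])
        · refine (inv_one_sub_le_exp ((hpow_le j hj).trans_lt hx₁)).trans ?_
          gcongr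
          exact hpow_le j hj
    _ = Real.exp ((∑ j ∈ Ico 1 (n + 1), x ^ j) / (1 - x)) := by
        rw [← Real.exp_sum, Finset.sum_div, Finset.Ico_add_one_right_eq_Icc]
    _ ≤ Real.exp (x ^ 1 / (1 - x) / (1 - x)) := by
        gcongr
        exact geom_sum_Ico_le_of_lt_one hx₀ hx₁
    _ = Real.exp (x / (1 - x) ^ 2) := by rw [pow_one, div_div, sq]

theorem sum_prod_pow_le_prod_inv_one_sub {α ι : Type*} {T : Finset α} {s : Finset ι}
    {m : α → ι → ℕ} (hm : Set.InjOn (fun a ↦ s.restrict (m a)) T) {w : ι → ℝ}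
    (hw₀ : ∀ i ∈ s, 0 ≤ w i) (hw₁ : ∀ i ∈ s, w i < 1) :
    ∑ a ∈ T, ∏ i ∈ s, w i ^ m a i ≤ ∏ i ∈ s, (1 - w i)⁻¹ := by
  classical
  obtain ⟨N, hN⟩ : ∃ N, ∀ a ∈ T, ∀ i ∈ s, m a i < N := by
    refine ⟨(T.sup fun a ↦ s.sup (m a)) + 1, fun a ha i hi ↦ Nat.lt_succ_of_le ?_⟩
    exact (le_sup (f := m a) hi).trans (le_sup (f := fun a ↦ s.sup (m a)) ha)
  have hterm : ∀ e : s → ℕ, 0 ≤ ∏ i : s, w i ^ e i := fun e ↦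
    Finset.prod_nonneg fun i _ ↦ pow_nonneg (hw₀ i i.2) _
  calc ∑ a ∈ T, ∏ i ∈ s, w i ^ m a i
      = ∑ e ∈ T.image fun a ↦ s.restrict (m a), ∏ i : s, w i ^ e i := by
        rw [Finset.sum_image hm]
        exact Finset.sum_congr rfl fun a _ ↦ (s.prod_coe_sort fun i ↦ w i ^ m a i).symm
    _ ≤ ∑ e ∈ Fintype.piFinset fun _ : s ↦ range N, ∏ i : s, w i ^ e i := by
        refine Finset.sum_le_sum_of_subset_of_nonneg (fun e he ↦ ?_) fun e _ _ ↦ hterm e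
        obtain ⟨a, ha, rfl⟩ := mem_image.1 he
        exact Fintype.mem_piFinset.2 fun i ↦ mem_range.2 (hN a ha i i.2)
    _ = ∏ i ∈ s, ∑ k ∈ range N, w i ^ k := by
        rw [← Finset.prod_univ_sum, s.prod_coe_sort fun i ↦ ∑ k ∈ range N, w i ^ k]
    _ ≤ ∏ i ∈ s, (1 - w i)⁻¹ := by
        refine Finset.prod_le_prod
          (fun i hi ↦ Finset.sum_nonneg fun k _ ↦ pow_nonneg (hw₀ i hi) k) fun i hi ↦ ?_
        rw [range_eq_Ico]
        simpa using geom_sum_Ico_le_of_lt_one (m := 0) (n := N) (hw₀ i hi) (hw₁ i hi)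

end EulerProduct

/-- The total number `∑ f, |μ(f)|` of boxes of a family of partitions, each given by its multiset of
parts. In contrast to the defining sum of `IsXn`, the boxes of `μ f` are not weighted by `deg f`. -/
def numBoxes {α : Type*} (μ : α →₀ Multiset ℕ) : ℕ :=
  μ.sum fun _ lam ↦ lam.sum

namespace IsXn

variable {F : Type*} [Field F] {n : ℕ} {μ : F[X] →₀ Multiset ℕ} {f : F[X]}

theorem natDegree_pos (h : IsXn F n μ) (hf : f ∈ μ.support) : 0 < f.natDegree :=
  (h.1 f hf).2.1.natDegree_pos

theorem sum_pos (h : IsXn F n μ) (hf : f ∈ μ.support) : 0 < (μ f).sum := by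
  obtain ⟨j, hj⟩ := Multiset.exists_mem_of_ne_zero (Finsupp.mem_support_iff.1 hf)
  exact (h.2.1 f j hj).trans_le (Multiset.le_sum_of_mem hj)

theorem sum_mul_natDegree_le (h : IsXn F n μ) (hf : f ∈ μ.support) :
    (μ f).sum * f.natDegree ≤ n :=
  h.2.2 ▸ Finset.single_le_sum (f := fun g ↦ (μ g).sum * g.natDegree) (fun _ _ ↦ Nat.zero_le _) hf

theorem natDegree_le (h : IsXn F n μ) (hf : f ∈ μ.support) : f.natDegree ≤ n :=
  (Nat.le_mul_of_pos_left _ (h.sum_pos hf)).trans (h.sum_mul_natDegree_le hf)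

theorem mem_Icc_of_mem (h : IsXn F n μ) {j : ℕ} (hj : j ∈ μ f) : j ∈ Icc 1 n := by
  have hf : f ∈ μ.support := Finsupp.mem_support_iff.2 fun h0 ↦ by simp [h0] at hj
  refine mem_Icc.2 ⟨h.2.1 f j hj, ?_⟩
  calc j ≤ (μ f).sum := Multiset.le_sum_of_mem hj
    _ ≤ (μ f).sum * f.natDegree := Nat.le_mul_of_pos_right _ (h.natDegree_pos hf)
    _ ≤ n := h.sum_mul_natDegree_le hf

theorem injOn_restrict_count (S : Finset F[X]) (n : ℕ) :
    Set.InjOn (fun μ : F[X] →₀ Multiset ℕ ↦ (S ×ˢ Icc 1 n).restrict fun p ↦ (μ p.1).count p.2)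
      {μ | IsXn F n μ ∧ μ.support ⊆ S} := by
  classical
  rintro μ ⟨hμ, hμS⟩ ν ⟨hν, hνS⟩ hcount
  ext f j
  by_cases hfj : f ∈ S ∧ j ∈ Icc 1 n
  · exact congrFun hcount ⟨(f, j), mem_product.2 hfj⟩
  · suffices hzero : ∀ κ : F[X] →₀ Multiset ℕ, IsXn F n κ → κ.support ⊆ S → (κ f).count j = 0 by
      rw [hzero μ hμ hμS, hzero ν hν hνS]
    refine fun κ hκ hκS ↦ Multiset.count_eq_zero_of_notMem fun hj ↦ hfj ⟨hκS ?_, ?_⟩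
    · exact Finsupp.mem_support_iff.2 fun h0 ↦ by simp [h0] at hj
    · exact hκ.mem_Icc_of_mem hj

theorem pow_numBoxes_div_pow (h : IsXn F n μ) {S : Finset F[X]} (hS : μ.support ⊆ S) (y q : ℝ) :
    y ^ numBoxes μ / q ^ n =
      ∏ p ∈ S ×ˢ Icc 1 n, ((y / q ^ p.1.natDegree) ^ p.2) ^ (μ p.1).count p.2 := by
  classical
  have hboxes : numBoxes μ = ∑ f ∈ S, (μ f).sum :=
    Finsupp.sum_of_support_subset _ hS _ (by simp)
  have hn : n = ∑ f ∈ S, f.natDegree * (μ f).sum := by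
    rw [← h.2.2, Finsupp.sum_of_support_subset _ hS _ (by simp)]
    simp only [mul_comm]
  calc y ^ numBoxes μ / q ^ n
      = ∏ f ∈ S, (y / q ^ f.natDegree) ^ (μ f).sum := by
        conv_lhs => rw [hn, hboxes]
        simp only [← Finset.prod_pow_eq_pow_sum, ← Finset.prod_div_distrib, div_pow, pow_mul]
    _ = ∏ f ∈ S, ∏ j ∈ Icc 1 n, ((y / q ^ f.natDegree) ^ j) ^ (μ f).count j := by
        refine Finset.prod_congr rfl fun f _ ↦ ?_
        rw [Finset.sum_multiset_count_of_subset (μ f) (Icc 1 n) fun j hj ↦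
          h.mem_Icc_of_mem (Multiset.mem_toFinset.1 hj), ← Finset.prod_pow_eq_pow_sum]
        simp only [smul_eq_mul, mul_comm, ← pow_mul]
    _ = _ := by rw [Finset.prod_product]

theorem sum_pow_numBoxes_div_pow_le_prod {T : Finset (F[X] →₀ Multiset ℕ)} {S : Finset F[X]}
    (hT : ∀ μ ∈ T, IsXn F n μ ∧ μ.support ⊆ S) {y q : ℝ} (hy : 0 ≤ y) (hq : 0 ≤ q)
    (hlt : ∀ f ∈ S, y / q ^ f.natDegree < 1) :
    ∑ μ ∈ T, y ^ numBoxes μ / q ^ n ≤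
      ∏ f ∈ S, ∏ j ∈ Icc 1 n, (1 - (y / q ^ f.natDegree) ^ j)⁻¹ := by
  have hnonneg : ∀ f : F[X], 0 ≤ y / q ^ f.natDegree := fun f ↦ by positivity
  rw [Finset.sum_congr rfl fun μ hμ ↦ (hT μ hμ).1.pow_numBoxes_div_pow (hT μ hμ).2 y q,
    ← Finset.prod_product' S (Icc 1 n) fun f j ↦ (1 - (y / q ^ f.natDegree) ^ j)⁻¹]
  refine sum_prod_pow_le_prod_inv_one_sub ((injOn_restrict_count S n).mono hT)
    (fun p _ ↦ pow_nonneg (hnonneg p.1) p.2) fun p hp ↦ ?_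
  obtain ⟨hf, hj⟩ := mem_product.1 hp
  exact pow_lt_one₀ (hnonneg p.1) (hlt p.1 hf) (Nat.one_le_iff_ne_zero.1 (mem_Icc.1 hj).1)

end IsXn

section UpperBound

variable {F : Type*} [Field F] [Finite F] {n : ℕ}

theorem div_card_pow_natDegree_le {f : F[X]} (hf : Irreducible f) {y : ℝ} (hy : 0 ≤ y) :
    y / (Nat.card F : ℝ) ^ f.natDegree ≤ y / Nat.card F := by
  have hq : 1 < Nat.card F := Finite.one_lt_card
  have hpow : Nat.card F ≤ Nat.card F ^ f.natDegree := Nat.le_self_pow hf.natDegree_pos.ne' _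
  gcongr
  exact_mod_cast hpow

theorem prod_prod_inv_one_sub_pow_le_exp {S : Finset F[X]}
    (hS : ∀ f ∈ S, f.Monic ∧ Irreducible f ∧ f.natDegree ≤ n) {y : ℝ} (hy₀ : 0 ≤ y)
    (hy : y < Nat.card F) :
    ∏ f ∈ S, ∏ j ∈ Icc 1 n, (1 - (y / (Nat.card F : ℝ) ^ f.natDegree) ^ j)⁻¹ ≤
      Real.exp (y / (1 - y / Nat.card F) ^ 2 * (1 + Real.log n)) := by
  set x : F[X] → ℝ := fun f ↦ y / (Nat.card F : ℝ) ^ f.natDegree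
  have hx₀ : ∀ f, 0 ≤ x f := fun f ↦ by positivity
  have hx_le : ∀ f ∈ S, x f ≤ y / Nat.card F := fun f hf ↦
    div_card_pow_natDegree_le (hS f hf).2.1 hy₀
  have hlt : y / Nat.card F < 1 := (div_lt_one (hy₀.trans_lt hy)).2 hy
  calc ∏ f ∈ S, ∏ j ∈ Icc 1 n, (1 - x f ^ j)⁻¹
      ≤ ∏ f ∈ S, Real.exp (x f / (1 - y / Nat.card F) ^ 2) := by
        refine Finset.prod_le_prod (fun f hf ↦ Finset.prod_nonneg fun j _ ↦ ?_) fun f hf ↦ ?_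
        · exact inv_nonneg.2 (sub_nonneg.2 (pow_le_one₀ (hx₀ f) ((hx_le f hf).trans hlt.le)))
        · refine (prod_inv_one_sub_pow_le_exp (hx₀ f) ((hx_le f hf).trans_lt hlt) n).trans ?_
          have := sub_pos.2 hlt
          gcongr
          exact hx_le f hf
    _ = Real.exp (y / (1 - y / Nat.card F) ^ 2 *
          ∑ f ∈ S, ((Nat.card F : ℝ) ^ f.natDegree)⁻¹) := by
        rw [← Real.exp_sum, Finset.mul_sum]
        exact congrArg Real.exp (Finset.sum_congr rfl fun f _ ↦ by ring)
    _ ≤ Real.exp (y / (1 - y / Nat.card F) ^ 2 * (1 + Real.log n)) := by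
        gcongr
        exact sum_inv_card_pow_natDegree_le_one_add_log hS

theorem sum_pow_numBoxes_div_card_pow_le {T : Finset (F[X] →₀ Multiset ℕ)}
    (hT : ∀ μ ∈ T, IsXn F n μ) {y : ℝ} (hy₀ : 0 ≤ y) (hy : y < Nat.card F) :
    ∑ μ ∈ T, y ^ numBoxes μ / (Nat.card F : ℝ) ^ n ≤
      Real.exp (y / (1 - y / Nat.card F) ^ 2 * (1 + Real.log n)) := by
  classical
  set S : Finset F[X] := T.biUnion fun μ ↦ μ.support
  have hS : ∀ f ∈ S, f.Monic ∧ Irreducible f ∧ f.natDegree ≤ n := fun f hf ↦ by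
    obtain ⟨μ, hμ, hfμ⟩ := mem_biUnion.1 hf
    exact ⟨((hT μ hμ).1 f hfμ).1, ((hT μ hμ).1 f hfμ).2.1, (hT μ hμ).natDegree_le hfμ⟩
  have hsupp : ∀ μ ∈ T, μ.support ⊆ S := fun μ hμ ↦ subset_biUnion_of_mem (fun μ ↦ μ.support) hμ
  have hlt : ∀ f ∈ S, y / (Nat.card F : ℝ) ^ f.natDegree < 1 := fun f hf ↦
    (div_card_pow_natDegree_le (hS f hf).2.1 hy₀).trans_lt ((div_lt_one (hy₀.trans_lt hy)).2 hy)
  exact (IsXn.sum_pow_numBoxes_div_pow_le_prod (fun μ hμ ↦ ⟨hT μ hμ, hsupp μ hμ⟩) hy₀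
    (Nat.cast_nonneg _) hlt).trans (prod_prod_inv_one_sub_pow_le_exp hS hy₀ hy)

theorem finite_setOf_isXn (F : Type*) [Field F] [Finite F] (n : ℕ) :
    {μ : F[X] →₀ Multiset ℕ | IsXn F n μ}.Finite := by
  have hq : 1 < Nat.card F := Finite.one_lt_card
  set B : ℝ := Real.exp (1 / (1 - 1 / Nat.card F) ^ 2 * (1 + Real.log n)) * (Nat.card F : ℝ) ^ n
  have hcard : ∀ T : Finset (F[X] →₀ Multiset ℕ), (∀ μ ∈ T, IsXn F n μ) → (#T : ℝ) ≤ B :=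
    fun T hT ↦ by
      have hmoment := sum_pow_numBoxes_div_card_pow_le hT zero_le_one (by exact_mod_cast hq)
      simp only [one_pow, Finset.sum_const, nsmul_eq_mul, mul_one_div] at hmoment
      rwa [div_le_iff₀ (by positivity)] at hmoment
  by_contra hinf
  obtain ⟨T, hT, hT_card⟩ := Set.Infinite.exists_subset_card_eq hinf (⌊B⌋₊ + 1)
  have := hcard T fun μ hμ ↦ hT hμ
  rw [hT_card] at this
  push_cast at this
  exact this.not_gt (Nat.lt_floor_add_one B)

theorem exp_three_halves_div_mul_one_add_log_le {q : ℝ} (hq : 2 ≤ q) (hn : n ≠ 0) :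
    Real.exp (3 / 2 / (1 - 3 / 2 / q) ^ 2 * (1 + Real.log n)) ≤ Real.exp 24 * (n : ℝ) ^ 24 :=
  calc Real.exp (3 / 2 / (1 - 3 / 2 / q) ^ 2 * (1 + Real.log n))
      ≤ Real.exp (3 / 2 / (1 - 3 / 2 / 2) ^ 2 * (1 + Real.log n)) := by gcongr
    _ = Real.exp 24 * (n : ℝ) ^ 24 := by
        have hconst : (3 / 2 / (1 - 3 / 2 / 2) ^ 2 : ℝ) = 24 := by norm_num
        have hpow : Real.exp (24 * Real.log n) = (n : ℝ) ^ 24 := by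
          simpa [Real.exp_log (by positivity : (0 : ℝ) < n)] using Real.exp_nat_mul (Real.log n) 24
        rw [hconst, mul_one_add, Real.exp_add, hpow]

theorem card_le_numBoxes_mul_pow_le (F : Type*) [Field F] [Finite F] (hn : n ≠ 0) (k : ℕ) :
    Nat.card {μ : F[X] →₀ Multiset ℕ // IsXn F n μ ∧ k ≤ numBoxes μ} * (3 / 2 : ℝ) ^ k ≤
      Real.exp 24 * n ^ 24 * (Nat.card F : ℝ) ^ n := by
  have hq : (2 : ℝ) ≤ Nat.card F := by exact_mod_cast Finite.one_lt_card (α := F)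
  have hfin : {μ : F[X] →₀ Multiset ℕ | IsXn F n μ ∧ k ≤ numBoxes μ}.Finite :=
    (finite_setOf_isXn F n).subset fun _ hμ ↦ hμ.1
  have hT : ∀ μ ∈ hfin.toFinset, IsXn F n μ ∧ k ≤ numBoxes μ := fun μ hμ ↦
    hfin.mem_toFinset.1 hμ
  rw [← div_le_iff₀ (by positivity)]
  calc Nat.card {μ : F[X] →₀ Multiset ℕ // IsXn F n μ ∧ k ≤ numBoxes μ} * (3 / 2 : ℝ) ^ k /
        (Nat.card F : ℝ) ^ n
      = #hfin.toFinset • ((3 / 2 : ℝ) ^ k / (Nat.card F : ℝ) ^ n) := by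
        rw [nsmul_eq_mul, ← Nat.card_eq_card_finite_toFinset hfin, mul_div_assoc]
        rfl
    _ ≤ ∑ μ ∈ hfin.toFinset, (3 / 2 : ℝ) ^ numBoxes μ / (Nat.card F : ℝ) ^ n := by
        refine Finset.card_nsmul_le_sum _ _ _ fun μ hμ ↦ ?_
        gcongr
        exacts [by norm_num, (hT μ hμ).2]
    _ ≤ Real.exp (3 / 2 / (1 - 3 / 2 / Nat.card F) ^ 2 * (1 + Real.log n)) :=
        sum_pow_numBoxes_div_card_pow_le (fun μ hμ ↦ (hT μ hμ).1) (by norm_num) (by linarith)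
    _ ≤ Real.exp 24 * n ^ 24 := exp_three_halves_div_mul_one_add_log_le hq hn

end UpperBound

section LowerBound

open UniqueFactorizationMonoid

/-- The family of one-column partitions given by the multiplicities of the monic irreducible factors
of `g`. It embeds the monic polynomials with nonzero constant term of degree `n` into `𝔛_n`. -/
noncomputable def columnFamily {F : Type*} [Field F] (g : F[X]) : F[X] →₀ Multiset ℕ :=
  open scoped Classical in
  (Multiset.toFinsupp (normalizedFactors g)).mapRange (fun k ↦ Multiset.replicate k 1)
    (Multiset.replicate_zero 1)

variable {F : Type*} [Field F] {g : F[X]}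

open scoped Classical in
theorem columnFamily_apply (g f : F[X]) :
    columnFamily g f = Multiset.replicate ((normalizedFactors g).count f) 1 := rfl

open scoped Classical in
theorem sum_columnFamily_apply (g f : F[X]) :
    (columnFamily g f).sum = (normalizedFactors g).count f := by
  rw [columnFamily_apply, Multiset.sum_replicate, smul_eq_mul, mul_one]

open scoped Classical in
theorem support_columnFamily (g : F[X]) :
    (columnFamily g).support = (normalizedFactors g).toFinset := by
  ext f
  rw [Finsupp.mem_support_iff, columnFamily_apply, Multiset.mem_toFinset,
    ← Multiset.count_ne_zero, ne_eq, ← Multiset.card_eq_zero, Multiset.card_replicate]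

theorem prod_normalizedFactors_of_monic [DecidableEq F] (hg : g.Monic) :
    (normalizedFactors g).prod = g := by
  rw [prod_normalizedFactors_eq hg.ne_zero, hg.normalize_eq_self]

theorem isXn_columnFamily (hg : g.Monic) (hg₀ : g.coeff 0 ≠ 0) :
    IsXn F g.natDegree (columnFamily g) := by
  classical
  refine ⟨fun f hf ↦ ?_, fun f m hm ↦ ?_, ?_⟩
  · rw [support_columnFamily, Multiset.mem_toFinset] at hf
    have hf_irr := irreducible_of_normalized_factor f hf
    refine ⟨normalize_normalized_factor f hf ▸ monic_normalize hf_irr.ne_zero, hf_irr, ?_⟩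
    rintro rfl
    exact hg₀ (X_dvd_iff.1 (dvd_of_mem_normalizedFactors hf))
  · rw [Multiset.eq_of_mem_replicate hm]
    exact one_pos
  · calc (columnFamily g).sum (fun f lam ↦ lam.sum * f.natDegree)
        = ((normalizedFactors g).map natDegree).sum := by
          rw [Finsupp.sum, support_columnFamily, Finset.sum_multiset_map_count]
          simp only [sum_columnFamily_apply, smul_eq_mul]
      _ = g.natDegree := by
          rw [← natDegree_multiset_prod _ (zero_notMem_normalizedFactors _),
            prod_normalizedFactors_of_monic hg]

theorem injOn_columnFamily : Set.InjOn (columnFamily (F := F)) {g | g.Monic} := by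
  classical
  intro g hg h hh hgh
  have hfactors : normalizedFactors g = normalizedFactors h := by
    ext f
    rw [← sum_columnFamily_apply, ← sum_columnFamily_apply, hgh]
  rw [← prod_normalizedFactors_of_monic hg, ← prod_normalizedFactors_of_monic hh, hfactors]

theorem card_monic_natDegree_eq (F : Type*) [Field F] (n : ℕ) :
    Nat.card {p : F[X] // p.Monic ∧ p.natDegree = n} = Nat.card F ^ n := by
  rw [Nat.card_congr ((monicEquivDegreeLT n).trans (degreeLTEquiv F n).toEquiv), Nat.card_fun,
    Nat.card_fin]

theorem card_pow_le_card_isXn_succ (F : Type*) [Field F] [Finite F] (n : ℕ) :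
    Nat.card F ^ n ≤ Nat.card {μ : F[X] →₀ Multiset ℕ // IsXn F (n + 1) μ} := by
  have hdeg : ∀ p : F[X], p.Monic → (1 : F[X]).natDegree < (X * p).natDegree := fun p hp ↦ by
    rw [natDegree_one, natDegree_X_mul hp.ne_zero]
    exact Nat.succ_pos _
  have hmonic : ∀ p : F[X], p.Monic → (X * p + 1).Monic := fun p hp ↦
    (monic_X.mul hp).add_of_left (degree_lt_degree (hdeg p hp))
  have hmem : ∀ p : F[X], p.Monic ∧ p.natDegree = n → IsXn F (n + 1) (columnFamily (X * p + 1)) :=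
    fun p hp ↦ by
      have hXn := isXn_columnFamily (hmonic p hp.1) (by simp)
      rwa [natDegree_add_eq_left_of_natDegree_lt (hdeg p hp.1), natDegree_X_mul hp.1.ne_zero,
        hp.2] at hXn
  have : Finite {μ : F[X] →₀ Multiset ℕ // IsXn F (n + 1) μ} := finite_setOf_isXn F (n + 1)
  rw [← card_monic_natDegree_eq F n]
  refine Nat.card_le_card_of_injective (fun p ↦ ⟨_, hmem p.1 p.2⟩) fun p r hpr ↦ Subtype.ext ?_
  have hX : X * p.1 + 1 = X * r.1 + 1 :=
    injOn_columnFamily (hmonic p.1 p.2.1) (hmonic r.1 r.2.1) (Subtype.ext_iff.1 hpr)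
  exact mul_left_cancel₀ X_ne_zero (add_right_cancel hX)

end LowerBound

section HookLength

variable {lam : Multiset ℕ} {c : ℕ × ℕ}

theorem mem_cellsOf : c ∈ cellsOf lam ↔
    (c.1 < Multiset.card lam ∧ c.2 < lam.sum) ∧ c.2 < partNth lam c.1 := by
  rw [cellsOf, mem_filter, mem_product, mem_range, mem_range]

theorem map_partNth_range (lam : Multiset ℕ) :
    (Multiset.range (Multiset.card lam)).map (partNth lam) = lam := by
  set L := (lam.sort (· ≤ ·)).reverse with hL
  have hL_length : L.length = Multiset.card lam := by simp [hL]
  calc (Multiset.range (Multiset.card lam)).map (partNth lam)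
      = ((List.range L.length).map fun i ↦ L.getD i 0 : List ℕ) := by rw [hL_length]; rfl
    _ = L := by
        congr 1
        exact List.ext_getElem (by simp) fun i _ hi ↦ by simp [hi]
    _ = lam := by rw [hL, Multiset.coe_reverse, Multiset.sort_eq]

theorem partNth_mem {i : ℕ} (hi : i < Multiset.card lam) : partNth lam i ∈ lam := by
  have hmem := Multiset.mem_map_of_mem (partNth lam) (Multiset.mem_range.2 hi)
  rwa [map_partNth_range] at hmem

theorem sum_partNth (lam : Multiset ℕ) :
    ∑ i ∈ range (Multiset.card lam), partNth lam i = lam.sum :=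
  congrArg Multiset.sum (map_partNth_range lam)

theorem partNth_le_partNth {i k : ℕ} (hik : i ≤ k) (hk : k < Multiset.card lam) :
    partNth lam k ≤ partNth lam i := by
  have hlength : (lam.sort (· ≤ ·)).reverse.length = Multiset.card lam := by simp
  rw [partNth, partNth, List.getD_eq_getElem _ _ (hlength ▸ hk),
    List.getD_eq_getElem _ _ (hlength ▸ hik.trans_lt hk)]
  exact (Multiset.pairwise_sort lam (· ≤ ·)).sortedLE.reverse.getElem_ge_getElem_of_le hik

theorem conjNth_eq_card_filter_range (lam : Multiset ℕ) (j : ℕ) :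
    conjNth lam j = #{i ∈ range (Multiset.card lam) | j < partNth lam i} := by
  conv_lhs => rw [conjNth, ← map_partNth_range lam, Multiset.filter_map, Multiset.card_map]
  rfl

theorem lt_conjNth_of_lt_partNth {i j : ℕ} (hi : i < Multiset.card lam) (hj : j < partNth lam i) :
    i < conjNth lam j := by
  have hsubset : range (i + 1) ⊆ {k ∈ range (Multiset.card lam) | j < partNth lam k} :=
    fun k hk ↦ by
      have hki : k ≤ i := Nat.lt_succ_iff.1 (mem_range.1 hk)
      exact mem_filter.2 ⟨mem_range.2 (hki.trans_lt hi), hj.trans_le (partNth_le_partNth hki hi)⟩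
  rw [conjNth_eq_card_filter_range, ← Nat.succ_le_iff]
  simpa using card_le_card hsubset

theorem card_cellsOf_le (lam : Multiset ℕ) : #(cellsOf lam) ≤ lam.sum :=
  calc #(cellsOf lam)
      ≤ #((range (Multiset.card lam)).sigma fun i ↦ range (partNth lam i)) := by
        refine card_le_card_of_injOn (fun c ↦ ⟨c.1, c.2⟩) (fun c hc ↦ ?_) fun c _ c' _ h ↦ ?_
        · obtain ⟨⟨hi, -⟩, hj⟩ := mem_cellsOf.1 hc
          exact mem_sigma.2 ⟨mem_range.2 hi, mem_range.2 hj⟩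
        · simpa [Prod.ext_iff] using h
    _ = lam.sum := by simp only [card_sigma, card_range, sum_partNth]

theorem add_card_le_sum_add_one (hpos : ∀ m ∈ lam, 0 < m) {m : ℕ} (hm : m ∈ lam) :
    m + Multiset.card lam ≤ lam.sum + 1 := by
  obtain ⟨s, rfl⟩ := Multiset.exists_cons_of_mem hm
  have hcard : Multiset.card s ≤ s.sum := by
    simpa using Multiset.card_nsmul_le_sum (s := s) (a := 1) fun k hk ↦
      hpos k (Multiset.mem_cons_of_mem hk)
  rw [Multiset.card_cons, Multiset.sum_cons]
  omega

theorem hookLen_mem_Icc (hpos : ∀ m ∈ lam, 0 < m) (hc : c ∈ cellsOf lam) :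
    hookLen lam c ∈ Icc 1 lam.sum := by
  obtain ⟨⟨hi, -⟩, hj⟩ := mem_cellsOf.1 hc
  have hconj : c.1 < conjNth lam c.2 := lt_conjNth_of_lt_partNth hi hj
  have hconj_le : conjNth lam c.2 ≤ Multiset.card lam :=
    Multiset.card_le_card (Multiset.filter_le _ _)
  have hsum := add_card_le_sum_add_one hpos (partNth_mem hi)
  rw [mem_Icc, hookLen]
  omega

end HookLength

section Valuation

theorem natCast_pow_sub_one_ne_zero {x m : ℕ} (hx : 1 < x) (hm : m ≠ 0) : (x : ℚ) ^ m - 1 ≠ 0 :=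
  sub_ne_zero.2 (one_lt_pow₀ (by exact_mod_cast hx) hm).ne'

theorem padicValRat_natCast_pow_sub_one (p : ℕ) {x : ℕ} (hx : x ≠ 0) (m : ℕ) :
    padicValRat p ((x : ℚ) ^ m - 1) = padicValNat p (x ^ m - 1) := by
  rw [← padicValRat.of_nat, Nat.cast_pred (by positivity), Nat.cast_pow]

variable {p : ℕ} [hp : Fact p.Prime]

theorem padicValRat_prod {ι : Type*} (s : Finset ι) {f : ι → ℚ} (hf : ∀ i ∈ s, f i ≠ 0) :
    padicValRat p (∏ i ∈ s, f i) = ∑ i ∈ s, padicValRat p (f i) := by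
  classical
  induction s using Finset.induction_on with
  | empty => simp
  | insert a s ha ih =>
    rw [Finset.forall_mem_insert] at hf
    rw [Finset.prod_insert ha, Finset.sum_insert ha,
      padicValRat.mul hf.1 (Finset.prod_ne_zero_iff.2 hf.2), ih hf.2]

theorem padicValNat_le_log_two (n : ℕ) : padicValNat p n ≤ Nat.log 2 n :=
  (padicValNat_le_nat_log n).trans (Nat.log_anti_left one_lt_two hp.out.two_le)

-- Restricting to even exponents makes lifting the exponent uniform in `p`, including `p = 2`.
theorem padicValNat_pow_two_mul_sub_one {x m : ℕ} (hx : 1 < x) (hdvd : p ∣ x - 1) (hm : m ≠ 0) :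
    padicValNat p (x ^ (2 * m) - 1) = padicValNat p (x ^ 2 - 1) + padicValNat p m := by
  have hpx : ¬p ∣ x := fun h ↦ hp.out.not_dvd_one
    ((Nat.dvd_sub_iff_right hx.le h).1 hdvd)
  have h2m : padicValNat p (2 * m) = padicValNat p 2 + padicValNat p m :=
    padicValNat.mul two_ne_zero hm
  rcases hp.out.eq_two_or_odd' with rfl | hodd
  · have hx_two := padicValNat.pow_two_sub_one hx hpx two_ne_zero even_two
    have hx_two_mul := padicValNat.pow_two_sub_one hx hpx (n := 2 * m) (by omega) (even_two_mul m)
    omega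
  · have hlte : ∀ k ≠ 0, padicValNat p (x ^ k - 1) = padicValNat p (x - 1) + padicValNat p k :=
      fun k hk ↦ by simpa using padicValNat.pow_sub_pow hodd (y := 1) hx hdvd hpx hk
    rw [hlte (2 * m) (by omega), hlte 2 two_ne_zero, h2m, add_assoc]

theorem padicValNat_pow_sub_one_le {q t m : ℕ} (hq : 1 < q) (ht : t ≠ 0) (hdvd : p ∣ q ^ t - 1)
    (hm : m ≠ 0) :
    padicValNat p (q ^ m - 1) ≤ padicValNat p ((q ^ t) ^ 2 - 1) + Nat.log 2 m := by
  have hdvd_pow : q ^ m - 1 ∣ (q ^ t) ^ (2 * m) - 1 := by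
    rw [← pow_mul]
    exact Nat.pow_sub_one_dvd_pow_sub_one q ⟨t * 2, by ring⟩
  have hne : (q ^ t) ^ (2 * m) - 1 ≠ 0 := by
    rw [← pow_mul]
    exact Nat.sub_ne_zero_of_lt (Nat.one_lt_pow (by positivity) hq)
  calc padicValNat p (q ^ m - 1)
      ≤ padicValNat p ((q ^ t) ^ (2 * m) - 1) :=
        (padicValNat_dvd_iff_le hne).1 (pow_padicValNat_dvd.trans hdvd_pow)
    _ = padicValNat p ((q ^ t) ^ 2 - 1) + padicValNat p m :=
        padicValNat_pow_two_mul_sub_one (Nat.one_lt_pow ht hq) hdvd hm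
    _ ≤ padicValNat p ((q ^ t) ^ 2 - 1) + Nat.log 2 m := by
        gcongr
        exact padicValNat_le_log_two m

theorem psiPoly_natCast_ne_zero {q : ℕ} (hq : 1 < q) (n : ℕ) : psiPoly n q ≠ 0 :=
  Finset.prod_ne_zero_iff.2 fun _ hi ↦
    natCast_pow_sub_one_ne_zero hq (Nat.one_le_iff_ne_zero.1 (mem_Icc.1 hi).1)

theorem div_le_padicValRat_psiPoly {q t : ℕ} (hq : 1 < q) (hdvd : p ∣ q ^ t - 1) (n : ℕ) :
    ((n / t : ℕ) : ℤ) ≤ padicValRat p (psiPoly n q) := by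
  have hne : ∀ i ∈ Icc 1 n, i ≠ 0 := fun i hi ↦ Nat.one_le_iff_ne_zero.1 (mem_Icc.1 hi).1
  calc ((n / t : ℕ) : ℤ) = ∑ i ∈ Icc 1 n, if t ∣ i then 1 else 0 := by
        rw [Finset.sum_boole, ← Nat.Ioc_filter_dvd_card_eq_div]
        rfl
    _ ≤ ∑ i ∈ Icc 1 n, padicValRat p ((q : ℚ) ^ i - 1) := by
        refine Finset.sum_le_sum fun i hi ↦ ?_
        rw [padicValRat_natCast_pow_sub_one p (by omega)]
        split_ifs with hti
        · exact_mod_cast one_le_padicValNat_of_dvd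
            (Nat.sub_ne_zero_of_lt (Nat.one_lt_pow (hne i hi) hq))
            (hdvd.trans (Nat.pow_sub_one_dvd_pow_sub_one q hti))
        · positivity
    _ = padicValRat p (psiPoly n q) :=
        (padicValRat_prod _ fun i hi ↦ natCast_pow_sub_one_ne_zero hq (hne i hi)).symm

variable {lam : Multiset ℕ}

theorem pow_hookLen_sub_one_ne_zero (hlam : ∀ m ∈ lam, 0 < m) {x : ℕ} (hx : 1 < x) {c : ℕ × ℕ}
    (hc : c ∈ cellsOf lam) : (x : ℚ) ^ hookLen lam c - 1 ≠ 0 :=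
  natCast_pow_sub_one_ne_zero hx
    (Nat.one_le_iff_ne_zero.1 (mem_Icc.1 (hookLen_mem_Icc hlam hc)).1)

theorem hFactor_natCast_ne_zero (hlam : ∀ m ∈ lam, 0 < m) {x : ℕ} (hx : 1 < x) :
    hFactor lam x ≠ 0 :=
  div_ne_zero (pow_ne_zero _ (by positivity))
    (Finset.prod_ne_zero_iff.2 fun _ hc ↦ pow_hookLen_sub_one_ne_zero hlam hx hc)

theorem neg_sum_mul_le_padicValRat_hFactor (hlam : ∀ m ∈ lam, 0 < m) {x A : ℕ} (hx : 1 < x)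
    (hA : ∀ h ∈ Icc 1 lam.sum, padicValNat p (x ^ h - 1) ≤ A) :
    -((lam.sum * A : ℕ) : ℤ) ≤ padicValRat p (hFactor lam x) := by
  have hne : ∀ c ∈ cellsOf lam, (x : ℚ) ^ hookLen lam c - 1 ≠ 0 := fun c hc ↦
    pow_hookLen_sub_one_ne_zero hlam hx hc
  have hden : ∑ c ∈ cellsOf lam, padicValRat p ((x : ℚ) ^ hookLen lam c - 1) ≤
      ((lam.sum * A : ℕ) : ℤ) :=
    calc ∑ c ∈ cellsOf lam, padicValRat p ((x : ℚ) ^ hookLen lam c - 1)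
        ≤ #(cellsOf lam) • (A : ℤ) := by
          refine Finset.sum_le_card_nsmul _ _ _ fun c hc ↦ ?_
          rw [padicValRat_natCast_pow_sub_one p (by omega)]
          exact_mod_cast hA _ (hookLen_mem_Icc hlam hc)
      _ ≤ ((lam.sum * A : ℕ) : ℤ) := by
          rw [nsmul_eq_mul]
          exact_mod_cast Nat.mul_le_mul_right A (card_cellsOf_le lam)
  have hnum : 0 ≤ padicValRat p ((x : ℚ) ^ alphaStat lam) := by
    rw [← Nat.cast_pow, padicValRat.of_nat]
    positivity
  rw [hFactor, padicValRat.div (pow_ne_zero _ (by positivity)) (Finset.prod_ne_zero_iff.2 hne),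
    padicValRat_prod _ hne]
  linarith

theorem IsXn.padicValNat_pow_natDegree_pow_sub_one_le {F : Type*} [Field F] {n : ℕ}
    {μ : F[X] →₀ Multiset ℕ} (hμ : IsXn F n μ) {f : F[X]} (hf : f ∈ μ.support) {q t : ℕ}
    (hq : 1 < q) (ht : t ≠ 0) (hdvd : p ∣ q ^ t - 1) {h : ℕ} (hh : h ∈ Icc 1 (μ f).sum) :
    padicValNat p ((q ^ f.natDegree) ^ h - 1) ≤
      padicValNat p ((q ^ t) ^ 2 - 1) + Nat.log 2 n := by
  obtain ⟨hh_pos, hh_le⟩ := mem_Icc.1 hh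
  have hle : f.natDegree * h ≤ n := calc
    f.natDegree * h ≤ (μ f).sum * f.natDegree := by rw [mul_comm]; gcongr
    _ ≤ n := hμ.sum_mul_natDegree_le hf
  rw [← pow_mul]
  refine (padicValNat_pow_sub_one_le hq ht hdvd
    (Nat.mul_pos (hμ.natDegree_pos hf) hh_pos).ne').trans ?_
  gcongr

theorem IsXn.div_sub_numBoxes_mul_le_padicValRat_dMu {F : Type*} [Field F] {n : ℕ}
    {μ : F[X] →₀ Multiset ℕ} (hμ : IsXn F n μ) {q t : ℕ} (hq : 1 < q) (ht : t ≠ 0)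
    (hdvd : p ∣ q ^ t - 1) :
    ((n / t : ℕ) : ℤ) - (numBoxes μ * (padicValNat p ((q ^ t) ^ 2 - 1) + Nat.log 2 n) : ℕ) ≤
      padicValRat p (dMu q n μ) := by
  set A := padicValNat p ((q ^ t) ^ 2 - 1) + Nat.log 2 n
  have hx : ∀ f ∈ μ.support, 1 < q ^ f.natDegree := fun f hf ↦
    Nat.one_lt_pow (hμ.natDegree_pos hf).ne' hq
  have hne : ∀ f ∈ μ.support, hFactor (μ f) ((q : ℚ) ^ f.natDegree) ≠ 0 := fun f hf ↦ by
    exact_mod_cast hFactor_natCast_ne_zero (hμ.2.1 f) (hx f hf)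
  have hfactors : -((numBoxes μ * A : ℕ) : ℤ) ≤
      ∑ f ∈ μ.support, padicValRat p (hFactor (μ f) ((q : ℚ) ^ f.natDegree)) :=
    calc -((numBoxes μ * A : ℕ) : ℤ) = ∑ f ∈ μ.support, -(((μ f).sum * A : ℕ) : ℤ) := by
          rw [numBoxes, Finsupp.sum, Finset.sum_mul, Finset.sum_neg_distrib, Nat.cast_sum]
      _ ≤ _ := Finset.sum_le_sum fun f hf ↦ by
          exact_mod_cast neg_sum_mul_le_padicValRat_hFactor (hμ.2.1 f) (hx f hf) fun h hh ↦
            hμ.padicValNat_pow_natDegree_pow_sub_one_le hf hq ht hdvd hh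
  rw [dMu, padicValRat.mul (psiPoly_natCast_ne_zero hq n) (Finset.prod_ne_zero_iff.2 hne),
    padicValRat_prod _ hne]
  linarith [div_le_padicValRat_psiPoly (p := p) hq hdvd n]

end Valuation

section FallingFactorial

theorem fallFact_eq_descFactorial (s : ℝ) {u : ℝ} (hu : 0 ≤ u) :
    fallFact s u = ⌊s⌋₊.descFactorial (⌊s⌋₊ - ⌊s - u⌋₊) := by
  have hle : ⌊s - u⌋₊ ≤ ⌊s⌋₊ := Nat.floor_mono (sub_le_self s hu)
  rw [Nat.descFactorial_eq_div (Nat.sub_le _ _), Nat.sub_sub_self hle, fallFact]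

theorem fallFact_le_pow (s : ℝ) {u : ℝ} (hu : 0 ≤ u) :
    fallFact s u ≤ (⌊s⌋₊ + 1) ^ ⌈u⌉₊ := by
  have hlength : ⌊s⌋₊ - ⌊s - u⌋₊ ≤ ⌈u⌉₊ := by
    have : ⌊s⌋₊ - ⌈u⌉₊ ≤ ⌊s - u⌋₊ := by
      rw [← Nat.floor_sub_natCast]
      exact Nat.floor_mono (sub_le_sub_left (Nat.le_ceil u) s)
    omega
  calc fallFact s u = ⌊s⌋₊.descFactorial (⌊s⌋₊ - ⌊s - u⌋₊) := fallFact_eq_descFactorial s hu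
    _ ≤ ⌊s⌋₊ ^ (⌊s⌋₊ - ⌊s - u⌋₊) := Nat.descFactorial_le_pow _ _
    _ ≤ (⌊s⌋₊ + 1) ^ (⌊s⌋₊ - ⌊s - u⌋₊) := by gcongr; exact Nat.le_succ _
    _ ≤ (⌊s⌋₊ + 1) ^ ⌈u⌉₊ := by gcongr; exact Nat.succ_pos _

theorem padicValNat_fallFact_div_le {p : ℕ} [Fact p.Prime] (n t : ℕ) {u : ℝ} (hu : 0 ≤ u) :
    padicValNat p (fallFact ((n : ℝ) / t) u) ≤ ⌈u⌉₊ * (Nat.log 2 n + 1) := by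
  have hfloor : ⌊(n : ℝ) / t⌋₊ + 1 ≤ 2 ^ (Nat.log 2 n + 1) := by
    rw [Nat.floor_div_natCast, Nat.floor_natCast]
    exact (Nat.div_le_self n t).trans_lt (Nat.lt_pow_succ_log_self one_lt_two n)
  calc padicValNat p (fallFact ((n : ℝ) / t) u)
      ≤ Nat.log 2 (fallFact ((n : ℝ) / t) u) := padicValNat_le_log_two _
    _ ≤ Nat.log 2 (2 ^ ((Nat.log 2 n + 1) * ⌈u⌉₊)) := by
        gcongr
        rw [pow_mul]
        exact (fallFact_le_pow _ hu).trans (Nat.pow_le_pow_left hfloor _)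
    _ = ⌈u⌉₊ * (Nat.log 2 n + 1) := by rw [Nat.log_pow one_lt_two, mul_comm]

end FallingFactorial

section Asymptotics

theorem eventually_mul_log_two_add_one_sq_le (C : ℕ) :
    ∀ᶠ n : ℕ in atTop, C * (Nat.log 2 n + 1) ^ 2 ≤ n := by
  have hlog : Tendsto (fun n ↦ Nat.log 2 n + 1) atTop atTop :=
    (tendsto_atTop_mono (fun _ ↦ Nat.le_succ _) <|
      tendsto_atTop_atTop.2 fun m ↦ ⟨2 ^ m, fun _ hn ↦ Nat.le_log_of_pow_le one_lt_two hn⟩)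
  have hpow : ∀ᶠ m : ℕ in atTop, 2 * C * (m : ℝ) ^ 2 ≤ 2 ^ m := by
    have hlim := (tendsto_pow_const_div_const_pow_of_one_lt 2 (one_lt_two (α := ℝ))).const_mul
      (2 * C : ℝ)
    rw [mul_zero] at hlim
    filter_upwards [hlim.eventually_le_const one_pos] with m hm
    rwa [← mul_div_assoc, div_le_one (by positivity)] at hm
  filter_upwards [hlog.eventually hpow, eventually_ne_atTop 0] with n hn hn₀
  have hn' : 2 * C * (Nat.log 2 n + 1) ^ 2 ≤ 2 ^ (Nat.log 2 n + 1) := by exact_mod_cast hn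
  have hlog_le : 2 ^ Nat.log 2 n ≤ n := Nat.pow_log_le_self 2 hn₀
  rw [pow_succ 2, mul_assoc] at hn'
  omega

theorem natCast_pow_le_three_halves_pow (n : ℕ) :
    (n : ℝ) ^ 25 ≤ (3 / 2) ^ (50 * (Nat.log 2 n + 1)) := by
  have hn : (n : ℝ) ≤ 2 ^ (Nat.log 2 n + 1) := by
    exact_mod_cast (Nat.lt_pow_succ_log_self one_lt_two n).le
  calc (n : ℝ) ^ 25 ≤ (2 ^ (Nat.log 2 n + 1)) ^ 25 := by gcongr
    _ ≤ (((3 / 2) ^ 2) ^ (Nat.log 2 n + 1)) ^ 25 := by gcongr; norm_num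
    _ = (3 / 2) ^ (50 * (Nat.log 2 n + 1)) := by rw [← pow_mul, ← pow_mul]; ring_nf

theorem card_le_numBoxes_div_card_le (F : Type*) [Field F] [Finite F] {n : ℕ} (hn : n ≠ 0) :
    (Nat.card {μ : F[X] →₀ Multiset ℕ //
        IsXn F n μ ∧ 50 * (Nat.log 2 n + 1) ≤ numBoxes μ} : ℝ) /
      Nat.card {μ : F[X] →₀ Multiset ℕ // IsXn F n μ} ≤ Nat.card F * Real.exp 24 / n := by
  obtain ⟨m, rfl⟩ := Nat.exists_eq_succ_of_ne_zero hn
  set n := m + 1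
  have hq : 0 < Nat.card F := Nat.card_pos
  have hlower : Nat.card F ^ m ≤ Nat.card {μ : F[X] →₀ Multiset ℕ // IsXn F n μ} :=
    card_pow_le_card_isXn_succ F m
  have hX : 0 < Nat.card {μ : F[X] →₀ Multiset ℕ // IsXn F n μ} :=
    (pow_pos hq m).trans_le hlower
  have hupper := card_le_numBoxes_mul_pow_le F hn (50 * (Nat.log 2 n + 1))
  rw [div_le_div_iff₀ (by exact_mod_cast hX) (by positivity)]
  refine le_of_mul_le_mul_right ?_ (by positivity : (0 : ℝ) < n ^ 24)
  set B := (Nat.card {μ : F[X] →₀ Multiset ℕ //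
    IsXn F n μ ∧ 50 * (Nat.log 2 n + 1) ≤ numBoxes μ} : ℝ)
  calc B * n * n ^ 24 = B * (n : ℝ) ^ 25 := by ring
    _ ≤ B * (3 / 2) ^ (50 * (Nat.log 2 n + 1)) := by
        gcongr
        exact natCast_pow_le_three_halves_pow n
    _ ≤ Real.exp 24 * n ^ 24 * (Nat.card F : ℝ) ^ n := hupper
    _ = Nat.card F * Real.exp 24 * (Nat.card F ^ m : ℕ) * n ^ 24 := by
        rw [pow_succ, Nat.cast_pow]
        ring
    _ ≤ Nat.card F * Real.exp 24 * Nat.card {μ : F[X] →₀ Multiset ℕ // IsXn F n μ} * n ^ 24 := by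
        gcongr

theorem tendsto_card_le_numBoxes_div_card (F : Type*) [Field F] [Finite F] :
    Tendsto (fun n ↦ (Nat.card {μ : F[X] →₀ Multiset ℕ //
        IsXn F n μ ∧ 50 * (Nat.log 2 n + 1) ≤ numBoxes μ} : ℝ) /
      Nat.card {μ : F[X] →₀ Multiset ℕ // IsXn F n μ}) atTop (𝓝 0) :=
  squeeze_zero' (.of_forall fun n ↦ by positivity)
    ((eventually_ne_atTop 0).mono fun _ hn ↦ card_le_numBoxes_div_card_le F hn)
    (tendsto_const_div_atTop_nhds_zero_nat _)

theorem eventually_le_numBoxes_of_padicValRat_dMu_lt (F : Type*) [Field F] {p : ℕ} [Fact p.Prime]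
    {q t : ℕ} (hq : 1 < q) (ht : t ≠ 0) (hdvd : p ∣ q ^ t - 1) {u : ℝ} (hu : 0 ≤ u) :
    ∀ᶠ n : ℕ in atTop, ∀ μ : F[X] →₀ Multiset ℕ, IsXn F n μ →
      padicValRat p (dMu q n μ) < padicValNat p (fallFact ((n : ℝ) / t) u) →
      50 * (Nat.log 2 n + 1) ≤ numBoxes μ := by
  set a := padicValNat p ((q ^ t) ^ 2 - 1)
  filter_upwards [eventually_mul_log_two_add_one_sq_le ((50 * (a + 1) + ⌈u⌉₊) * t)]
    with n hn μ hμ hlt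
  by_contra! hboxes
  set L := Nat.log 2 n
  have hlow : ((n / t : ℕ) : ℤ) - (numBoxes μ * (a + L) : ℕ) ≤ padicValRat p (dMu q n μ) :=
    hμ.div_sub_numBoxes_mul_le_padicValRat_dMu hq ht hdvd
  have hfall : padicValNat p (fallFact ((n : ℝ) / t) u) ≤ ⌈u⌉₊ * (L + 1) :=
    padicValNat_fallFact_div_le n t hu
  have hdiv : (50 * (a + 1) + ⌈u⌉₊) * (L + 1) ^ 2 ≤ n / t := by
    rw [Nat.le_div_iff_mul_le (Nat.pos_of_ne_zero ht)]
    linarith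
  have hboxes_le : numBoxes μ * (a + L) ≤ 50 * (L + 1) * ((a + 1) * (L + 1)) :=
    Nat.mul_le_mul hboxes.le (by nlinarith)
  have hceil_le : ⌈u⌉₊ * (L + 1) ≤ ⌈u⌉₊ * (L + 1) ^ 2 :=
    Nat.mul_le_mul_left _ (Nat.le_self_pow two_ne_zero _)
  have hlt_div : n / t < numBoxes μ * (a + L) + ⌈u⌉₊ * (L + 1) := by omega
  nlinarith

end Asymptotics

theorem dvd_pow_orderOf_sub_one {q ℓ : ℕ} (hq : q ≠ 0) : ℓ ∣ q ^ orderOf (q : ZMod ℓ) - 1 := by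
  rw [← Nat.modEq_iff_dvd' (Nat.one_le_pow _ _ (Nat.pos_of_ne_zero hq)),
    ← ZMod.natCast_eq_natCast_iff, Nat.cast_pow, pow_orderOf_eq_one, Nat.cast_one]

theorem orderOf_natCast_zmod_ne_zero {q ℓ : ℕ} [NeZero ℓ] (hco : q.Coprime ℓ) :
    orderOf (q : ZMod ℓ) ≠ 0 := by
  rw [← ZMod.coe_unitOfCoprime q hco, orderOf_units]
  exact (orderOf_pos _).ne'

theorem ell_adic_proportion_of_low_valuation_general (F : Type*) [Field F] [Finite F] {ℓ : ℕ}
    (hℓ : ℓ.Prime) (hco : (Nat.card F).Coprime ℓ) {u : ℝ} (hu : 0 ≤ u) :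
    Tendsto (fun n : ℕ ↦ (Nat.card {μ : F[X] →₀ Multiset ℕ // IsXn F n μ ∧
        padicValRat ℓ (dMu (Nat.card F) n μ) <
          padicValNat ℓ (fallFact ((n : ℝ) / orderOf (Nat.card F : ZMod ℓ)) u)} : ℝ) /
      Nat.card {μ : F[X] →₀ Multiset ℕ // IsXn F n μ}) atTop (𝓝 0) := by
  have : Fact ℓ.Prime := ⟨hℓ⟩
  have hq : 1 < Nat.card F := Finite.one_lt_card
  refine squeeze_zero' (.of_forall fun n ↦ by positivity) ?_ (tendsto_card_le_numBoxes_div_card F)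
  filter_upwards [eventually_le_numBoxes_of_padicValRat_dMu_lt F hq
    (orderOf_natCast_zmod_ne_zero hco) (dvd_pow_orderOf_sub_one (by omega)) hu] with n hn
  have hfin : {μ : F[X] →₀ Multiset ℕ |
      IsXn F n μ ∧ 50 * (Nat.log 2 n + 1) ≤ numBoxes μ}.Finite :=
    (finite_setOf_isXn F n).subset fun _ hμ ↦ hμ.1
  gcongr
  exact Nat.card_mono hfin fun μ hμ ↦ ⟨hμ.1, hn μ hμ.1 hμ.2⟩

theorem ell_adic_proportion_of_low_valuation
    (ℓ : ℕ) (hℓ : ℓ.Prime) (hodd : Odd ℓ)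
    (q : ℕ) (hq : IsPrimePow q) (hco : Nat.Coprime q ℓ)
    (t : ℕ) (ht : t = orderOf (q : ZMod ℓ))
    (F : Type*) [Field F] [Fintype F] (hFq : Fintype.card F = q) :
    ∀ u ε : ℝ, 0 < u → 0 < ε → ∃ N : ℕ, ∀ n ≥ N,
      (Nat.card {μ : Polynomial F →₀ Multiset ℕ //
            IsXn F n μ ∧
              padicValRat ℓ (dMu q n μ) <
                (padicValNat ℓ (fallFact ((n : ℝ) / (t : ℝ)) u) : ℤ)} : ℝ) /
          (Nat.card {μ : Polynomial F →₀ Multiset ℕ // IsXn F n μ} : ℝ) < ε := by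
  intro u ε hu hε
  subst hFq ht
  rw [← Nat.card_eq_fintype_card] at hco ⊢
  exact eventually_atTop.1
    ((ell_adic_proportion_of_low_valuation_general F hℓ hco hu.le).eventually_lt_const hε)
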